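/- Let α be an ordinal and A, B nonempty worms all of whose entries are at least α. Then in the Worm Calculus: (1) if b_α(B) ⊢_WC A, then A <_α B; (2) if A <_α b_α(B), then A <_α B; (3) if b_α(A) <_α B and h_{α+1}(A) <_{α+1} h_{α+1}(B), then A <_{α+1} B; (4) if b_α(A) <_α B, b_α(B) <_α A, and h_{α+1}(A) ≡_WC h_{α+1}(B), then A ≡_WC B. -/

import Mathlib

/-!
Write `A = h ++ r` with `h` its `(α+1)`-head. Since all entries of `A` are at least `α`, the
remainder `r` is either empty or of the form `α :: b_α(A)` (`wormHead_decomp`). Two facts follow.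

* A nonempty `A` derives `α :: b_α(A)` (`WCDer.cons_body`): monotonicity and transitivity absorb the
  entries of the head into the leading `α`. Claims (1) and (2) are then necessitation, together with
  transitivity for (2).
* A worm that derives both `D ++ h` and `α :: b_α(A)`, where the entries of `D` exceed `α`, derives
  `D ++ A` (`WCDer.append_of_head_body`), by rule R3. As every worm derives its own head, this gives
  claim (3) with `D = [α + 1]` and both directions of claim (4) with `D = []`.
-/

/-- A worm is a finite list of ordinals; `[]` is ⊤. -/
abbrev Worm : Type _ := List Ordinal

/-- Formulas of the closed Reflection Calculus RC⁰. -/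
inductive RCFormula : Type _ where
  | top : RCFormula
  | and : RCFormula → RCFormula → RCFormula
  | dia : Ordinal → RCFormula → RCFormula

/-- The RC⁰ formula corresponding to a worm. -/
def Worm.toRC : Worm → RCFormula
  | [] => .top
  | α :: A => .dia α (Worm.toRC A)

/-- Derivability in the closed Reflection Calculus RC⁰. -/
inductive RCDer : RCFormula → RCFormula → Prop where
  | refl (φ) : RCDer φ φ
  | top (φ) : RCDer φ .top
  | andL (φ ψ) : RCDer (.and φ ψ) φ
  | andR (φ ψ) : RCDer (.and φ ψ) ψ
  | trans_ax (α φ) : RCDer (.dia α (.dia α φ)) (.dia α φ)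
  | mono_ax {α β : Ordinal} (φ) : β < α → RCDer (.dia α φ) (.dia β φ)
  | ax5 {α β : Ordinal} (φ ψ) : β < α →
      RCDer (.and (.dia α φ) (.dia β ψ)) (.dia α (.and φ (.dia β ψ)))
  | cut {φ ψ χ} : RCDer φ ψ → RCDer ψ χ → RCDer φ χ
  | andI {φ ψ χ} : RCDer φ ψ → RCDer φ χ → RCDer φ (.and ψ χ)
  | nec {φ ψ} (α) : RCDer φ ψ → RCDer (.dia α φ) (.dia α ψ)

/-- Derivability in the Worm Calculus WC. -/
inductive WCDer : Worm → Worm → Prop where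
  | top (A) : WCDer A []
  | trans_ax (α A) : WCDer (α :: α :: A) (α :: A)
  | mono_ax {α β : Ordinal} (A) : β < α → WCDer (α :: A) (β :: A)
  | cut {A B C} : WCDer A B → WCDer B C → WCDer A C
  | nec {A B} (α) : WCDer A B → WCDer (α :: A) (α :: B)
  | rule3 {A B C} (α) : WCDer A B → WCDer A (α :: C) →
      (∀ β ∈ B, α + 1 ≤ β) → WCDer A (B ++ α :: C)

open Classical in
/-- The α-head of a worm: its longest initial segment with all entries ≥ α. -/
noncomputable def wormHead (α : Ordinal) (A : Worm) : Worm :=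
  A.takeWhile (fun β => decide (α ≤ β))

open Classical in
/-- The α-remainder of a worm: what is left after removing the α-head. -/
noncomputable def wormRem (α : Ordinal) (A : Worm) : Worm :=
  A.dropWhile (fun β => decide (α ≤ β))

/-- The α-body of a worm: the tail of its (α+1)-remainder. -/
noncomputable def wormBody (α : Ordinal) (A : Worm) : Worm :=
  (wormRem (α + 1) A).tail

/-- A Kripke model: a carrier with a relation for each ordinal. -/
structure KripkeModel : Type _ where
  W : Type _
  R : Ordinal → W → W → Prop

/-- Forcing of worms in a Kripke model. -/
def KripkeModel.forces (M : KripkeModel) : M.W → Worm → Prop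
  | _, [] => True
  | x, α :: A => ∃ y, M.R α x y ∧ M.forces y A

/-- A Kripke model is Euclidean if `x R_α y` and `x R_β z` with `β < α` imply `y R_β z`. -/
def KripkeModel.Euclidean (M : KripkeModel) : Prop :=
  ∀ ⦃α β : Ordinal⦄, β < α → ∀ ⦃x y z : M.W⦄, M.R α x y → M.R β x z → M.R β y z

/-- A Kripke model is a universal model for WC if derivability coincides with
semantic consequence on the model. -/
def KripkeModel.UniversalWC (M : KripkeModel) : Prop :=
  ∀ A B : Worm, WCDer A B ↔ ∀ x : M.W, M.forces x A → M.forces x B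

theorem WCDer.refl : ∀ A : Worm, WCDer A A
  | [] => .top _
  | α :: A => .nec α (WCDer.refl A)

theorem WCDer.mono_le {α β : Ordinal} (h : β ≤ α) (A : Worm) : WCDer (α :: A) (β :: A) := by
  rcases h.lt_or_eq with h | rfl
  · exact .mono_ax A h
  · exact .refl _

theorem WCDer.append_left : ∀ A C : Worm, WCDer (A ++ C) A
  | [], _ => .top _
  | α :: A, C => .nec α (WCDer.append_left A C)

theorem WCDer.append_cons {α : Ordinal} (C : Worm) :
    ∀ H : Worm, (∀ β ∈ H, α ≤ β) → WCDer (H ++ α :: C) (α :: C)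
  | [], _ => .refl _
  | β :: H, h =>
    ((WCDer.append_cons C H fun γ hγ => h γ (List.mem_cons_of_mem _ hγ)).nec β).cut
      ((WCDer.mono_le (h β List.mem_cons_self) _).cut (.trans_ax α C))

theorem WCDer.to_head (α : Ordinal) (A : Worm) : WCDer A (wormHead α A) := by
  have h := WCDer.append_left (wormHead α A) (wormRem α A)
  rwa [wormHead, wormRem, List.takeWhile_append_dropWhile] at h

theorem le_of_mem_wormHead {α β : Ordinal} {A : Worm} (h : β ∈ wormHead α A) : α ≤ β := by
  simpa using List.mem_takeWhile_imp h

/-- A worm with entries at least `α` is either its own `(α+1)`-head, with empty `α`-body, or its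
`(α+1)`-head is followed by exactly `α` and the `α`-body. -/
theorem wormHead_decomp {α : Ordinal} {A : Worm} (hA : ∀ β ∈ A, α ≤ β) :
    (wormHead (α + 1) A = A ∧ wormBody α A = []) ∨
      wormHead (α + 1) A ++ α :: wormBody α A = A := by
  have happ : wormHead (α + 1) A ++ wormRem (α + 1) A = A := List.takeWhile_append_dropWhile
  rcases hr : wormRem (α + 1) A with _ | ⟨γ, C⟩
  · left
    rw [hr, List.append_nil] at happ
    exact ⟨happ, by simp [wormBody, hr]⟩
  · right
    have hle : α ≤ γ := hA γ (by rw [← happ, hr]; simp)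
    have hlt : ¬ α + 1 ≤ γ := by
      classical
      have h := List.head?_dropWhile_not (fun β => decide (α + 1 ≤ β)) A
      have hr' : A.dropWhile (fun β => decide (α + 1 ≤ β)) = γ :: C := by
        rw [← hr, wormRem]
      rw [hr'] at h
      simpa using h
    have hγ : γ = α := le_antisymm (Order.lt_add_one_iff.1 (not_le.1 hlt)) hle
    rw [hr, hγ] at happ
    simpa [wormBody, hr] using happ

theorem WCDer.cons_body {α : Ordinal} {A : Worm} (hne : A ≠ []) (hA : ∀ β ∈ A, α ≤ β) :
    WCDer A (α :: wormBody α A) := by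
  rcases wormHead_decomp hA with ⟨-, hb⟩ | h
  · rw [hb]
    obtain ⟨β, C, rfl⟩ := List.exists_cons_of_ne_nil hne
    exact ((WCDer.top C).nec β).cut (.mono_le (hA β List.mem_cons_self) [])
  · have := WCDer.append_cons (wormBody α A) (wormHead (α + 1) A)
      fun β hβ => (Order.le_succ α).trans (by simpa using le_of_mem_wormHead hβ)
    rwa [h] at this

theorem WCDer.append_of_head_body {α : Ordinal} {A B D : Worm} (hA : ∀ β ∈ A, α ≤ β)
    (hD : ∀ β ∈ D, α + 1 ≤ β) (hh : WCDer B (D ++ wormHead (α + 1) A))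
    (hb : WCDer B (α :: wormBody α A)) : WCDer B (D ++ A) := by
  rcases wormHead_decomp hA with ⟨h, -⟩ | h
  · rwa [h] at hh
  · have := WCDer.rule3 α hh hb fun β hβ =>
      (List.mem_append.1 hβ).elim (hD β) le_of_mem_wormHead
    rwa [List.append_assoc, h] at this

theorem recursion_body (α : Ordinal) (A B : Worm)
    (hAne : A ≠ []) (hBne : B ≠ [])
    (hA : ∀ β ∈ A, α ≤ β) (hB : ∀ β ∈ B, α ≤ β) :
    (WCDer (wormBody α B) A → WCDer B (α :: A)) ∧
    (WCDer (wormBody α B) (α :: A) → WCDer B (α :: A)) ∧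
    (WCDer B (α :: wormBody α A) →
      WCDer (wormHead (α + 1) B) ((α + 1) :: wormHead (α + 1) A) →
      WCDer B ((α + 1) :: A)) ∧
    (WCDer B (α :: wormBody α A) → WCDer A (α :: wormBody α B) →
      (WCDer (wormHead (α + 1) A) (wormHead (α + 1) B) ∧
        WCDer (wormHead (α + 1) B) (wormHead (α + 1) A)) →
      (WCDer A B ∧ WCDer B A)) := by
  refine ⟨fun h => ?_, fun h => ?_, fun hb hh => ?_, fun hb hb' hh => ⟨?_, ?_⟩⟩
  · exact (WCDer.cons_body hBne hB).cut (h.nec α)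
  · exact (WCDer.cons_body hBne hB).cut ((h.nec α).cut (.trans_ax α A))
  · exact WCDer.append_of_head_body (D := [α + 1]) hA (by simp) ((WCDer.to_head _ B).cut hh) hb
  · exact WCDer.append_of_head_body (D := []) hB (by simp) ((WCDer.to_head _ A).cut hh.1) hb'
  · exact WCDer.append_of_head_body (D := []) hA (by simp) ((WCDer.to_head _ B).cut hh.2) hb
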